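/- arXiv:math/0606374 — 2 statements merged into one kernel-verified Lean document; each statement's English description precedes it below -/
import Mathlib

section
/- Let Q : F₂^m → F₂^n be a quadratic map which is effective, i.e., Q(w) = 0 implies w = 0. Then m ≤ 2n. -/
/-- The polarization (associated bilinear map) of a map `Q`:
`B(x,y) = Q(x+y) + Q(x) + Q(y)`. -/
def qpolar {W V : Type*} [Add W] [Add V] (Q : W → V) (x y : W) : V :=
  Q (x + y) + Q x + Q y

/-- `Q` is a quadratic map between `F₂`-vector spaces: its polarization is `F₂`-bilinear. -/
def IsQuadraticMap {W V : Type*} [AddCommGroup W] [Module (ZMod 2) W]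
    [AddCommGroup V] [Module (ZMod 2) V] (Q : W → V) : Prop :=
  (∀ x y z : W, qpolar Q (x + y) z = qpolar Q x z + qpolar Q y z) ∧
  (∀ x y z : W, qpolar Q x (y + z) = qpolar Q x y + qpolar Q x z)

/-!
In coordinates, a quadratic map `F₂^m → F₂^n` is given by `n` polynomials of degree at most two in
`m` variables. If `m > 2n`, the Chevalley–Warning theorem makes the number of their common zeros
even, so `0` cannot be the only one. The same argument works over every finite field.
-/

open Module MvPolynomial

section QuadraticForm

variable {ι R M : Type*} [Finite ι] [CommRing R] [AddCommGroup M] [Module R M]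

theorem exists_isHomogeneous_two_eval_repr_eq (b : Basis ι R M) (q : QuadraticForm R M) :
    ∃ f : MvPolynomial ι R, f.IsHomogeneous 2 ∧ ∀ x, eval (b.repr x) f = q x := by
  have := Fintype.ofFinite ι
  have : Module.Free R M := .of_basis b
  obtain ⟨B, rfl⟩ := LinearMap.BilinMap.toQuadraticMap_surjective q
  refine ⟨∑ i, ∑ j, C (B (b i) (b j)) * (X i * X j), ?_, fun x ↦ ?_⟩
  · exact .sum _ _ _ fun i _ ↦ .sum _ _ _ fun j _ ↦
      ((isHomogeneous_X R i).mul (isHomogeneous_X R j)).C_mul _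
  · calc
      eval (b.repr x) (∑ i, ∑ j, C (B (b i) (b j)) * (X i * X j))
          = ∑ i, ∑ j, b.repr x i • b.repr x j • B (b i) (b j) := by
        simp only [map_sum, map_mul, eval_C, eval_X, smul_eq_mul]
        exact Finset.sum_congr rfl fun i _ ↦ Finset.sum_congr rfl fun j _ ↦ by ring
      _ = B x x := by
        rw [← LinearMap.sum_repr_mul_repr_mul b b (B := B)]
        simp [Finsupp.sum_fintype]

end QuadraticForm

section FiniteField

variable {K W V : Type*} [Field K] [Finite K] [AddCommGroup W] [Module K W]
  [AddCommGroup V] [Module K V] [Module.Finite K V]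

theorem char_dvd_card_zeros_of_two_mul_finrank_lt (p : ℕ) [CharP K p]
    (Q : QuadraticMap K W V) (h : 2 * finrank K V < finrank K W) :
    p ∣ Nat.card {w // Q w = 0} := by
  classical
  have := Fintype.ofFinite K
  have : Module.Finite K W := finite_of_finrank_pos (by lia)
  let b := finBasis K W
  let c := finBasis K V
  choose f hf hfQ using fun j ↦
    exists_isHomogeneous_two_eval_repr_eq b ((c.coord j).compQuadraticMap Q)
  have hdeg : ∑ j, (f j).totalDegree < Fintype.card (Fin (finrank K W)) :=
    calc
      ∑ j, (f j).totalDegree ≤ ∑ _j : Fin (finrank K V), 2 :=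
        Finset.sum_le_sum fun j _ ↦ (hf j).totalDegree_le
      _ = 2 * finrank K V := by simp [mul_comm]
      _ < Fintype.card (Fin (finrank K W)) := by simpa using h
  have hzero (w : W) : Q w = 0 ↔ ∀ j, eval (b.equivFun w) (f j) = 0 := by
    simp [hfQ, ← c.forall_coord_eq_zero_iff]
  let e : {w // Q w = 0} ≃ {x // ∀ j, eval x (f j) = 0} := b.equivFun.toEquiv.subtypeEquiv hzero
  rw [Nat.card_congr e, Nat.card_eq_fintype_card]
  convert! char_dvd_card_solutions_of_fintype_sum_lt p hdeg

theorem finrank_le_two_mul_finrank_of_anisotropic {Q : QuadraticMap K W V}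
    (hQ : Q.Anisotropic) : finrank K W ≤ 2 * finrank K V := by
  by_contra! h
  obtain ⟨p, _⟩ := CharP.exists K
  have hcard : Nat.card {w // Q w = 0} = 1 := by
    simp [hQ.eq_zero_iff]
  have hdvd := char_dvd_card_zeros_of_two_mul_finrank_lt p Q h
  exact CharP.char_ne_one K p (Nat.dvd_one.mp (hcard ▸ hdvd))

theorem rank_le_two_mul_finrank_of_anisotropic {Q : QuadraticMap K W V} (hQ : Q.Anisotropic) :
    Module.rank K W ≤ (2 * finrank K V : ℕ) := by
  refine rank_le fun s hs ↦ ?_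
  have hQs : (Q.comp (Submodule.span K (s : Set W)).subtype).Anisotropic := fun w hw ↦
    Subtype.ext (hQ w hw)
  rw [← finrank_span_finset_eq_card hs]
  exact finrank_le_two_mul_finrank_of_anisotropic hQs

end FiniteField

theorem qpolar_eq_polar {W V : Type*} [AddCommGroup W] [AddCommGroup V] [Module (ZMod 2) V]
    (Q : W → V) : qpolar Q = QuadraticMap.polar Q := by
  ext x y
  simp only [QuadraticMap.polar, qpolar, ZModModule.sub_eq_add]

namespace IsQuadraticMap

variable {W V : Type*} [AddCommGroup W] [Module (ZMod 2) W] [AddCommGroup V] [Module (ZMod 2) V]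
  {Q : W → V}

theorem map_zero (hQ : IsQuadraticMap Q) : Q 0 = 0 := by
  simpa [qpolar, ZModModule.add_self] using hQ.1 0 0 0

theorem polar_add_left (hQ : IsQuadraticMap Q) (x y z : W) :
    QuadraticMap.polar Q (x + y) z = QuadraticMap.polar Q x z + QuadraticMap.polar Q y z := by
  simpa only [qpolar_eq_polar] using hQ.1 x y z

theorem map_smul (hQ : IsQuadraticMap Q) (a : ZMod 2) (x : W) : Q (a • x) = (a * a) • Q x := by
  obtain rfl | rfl : a = 0 ∨ a = 1 := by decide +revert
  all_goals simp [hQ.map_zero]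

/-- An `F₂`-quadratic map in the sense of `IsQuadraticMap`, as a Mathlib `QuadraticMap`. Over `F₂`
homogeneity of degree two amounts to `Q 0 = 0`, which biadditivity of the polarization implies. -/
def toQuadraticMap (hQ : IsQuadraticMap Q) : QuadraticMap (ZMod 2) W V :=
  .ofPolar Q hQ.map_smul hQ.polar_add_left fun a x y ↦
    ZMod.map_smul (AddMonoidHom.mk' (QuadraticMap.polar Q · y) (hQ.polar_add_left · · y)) a x

end IsQuadraticMap

theorem effective_implies_dim_bound_general {W V : Type*} [AddCommGroup W] [Module (ZMod 2) W]
    [AddCommGroup V] [Module (ZMod 2) V] [Module.Finite (ZMod 2) V] {Q : W → V}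
    (hQ : IsQuadraticMap Q) (heff : ∀ w, Q w = 0 → w = 0) :
    Module.rank (ZMod 2) W ≤ (2 * finrank (ZMod 2) V : ℕ) :=
  rank_le_two_mul_finrank_of_anisotropic (Q := hQ.toQuadraticMap) heff

/-- An effective quadratic map `Q : F₂^m → F₂^n` forces `m ≤ 2n`. -/
theorem effective_implies_dim_bound {m n : ℕ}
    (Q : (Fin m → ZMod 2) → (Fin n → ZMod 2)) (hQ : IsQuadraticMap Q)
    (heff : ∀ w, Q w = 0 → w = 0) :
    m ≤ 2 * n := by
  simpa using finrank_le_of_rank_le (effective_implies_dim_bound_general hQ heff)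
end

section
/- Let q₁,…,q_n ∈ F₂[x₁,…,x_n] be polynomials in bijective form, i.e., q_i = x_i² + Σ_{l<k} c^{(i)}_{lk} x_l x_k with c^{(i)}_{lk} ∈ F₂, and suppose q₁,…,q_n form a regular sequence in every order. Let L = Σ_i L_i x_i (with L_i ∈ M_n(F₂)) be an n×n matrix of homogeneous linear forms such that β(q) = Lq, where q is the column vector (q₁,…,q_n) and β is applied entrywise. Then β(L) + L² = Σ_i (L_i² + L_i) q_i. -/
open MvPolynomial

/-- The Bockstein operator: the unique `F₂`-derivation of `F₂[x₁,…,x_m]`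
with `β(x_i) = x_i²`, given by `β(f) = Σ_i x_i² ∂f/∂x_i`. -/
noncomputable def bockstein {m : ℕ} (f : MvPolynomial (Fin m) (ZMod 2)) :
    MvPolynomial (Fin m) (ZMod 2) :=
  ∑ i : Fin m, X i ^ 2 * pderiv i f

/-- `f₁,…,f_r` is a regular sequence: each `f_k` is a nonzerodivisor in the quotient
ring modulo the ideal generated by its predecessors. -/
def IsRegularSeq {R : Type*} [CommRing R] {r : ℕ} (f : Fin r → R) : Prop :=
  ∀ k : Fin r, ∀ g : R,
    f k * g ∈ Ideal.span (f '' {j | j < k}) → g ∈ Ideal.span (f '' {j | j < k})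

/-!
Applying `β` to `β(q) = Lq` and using `β² = 0` gives `(β(L) + L²)q = 0`. The coefficients of a
relation among the members of a regular sequence lie in the ideal it generates, so each entry of
`β(L) + L²`, being quadratic like the `q_k`, is a scalar combination of them. Since
`q_i(e_k) = δ_{ik}`, the scalars are found by evaluation at the basis vectors `e_k`; by Euler's
identity and `x² = x` in `F₂`, `β(L)` and `L` agree at every point of `F₂ⁿ`.
-/

theorem IsRegularSeq.comp_castSucc {R : Type*} [CommRing R] {r : ℕ} {f : Fin (r + 1) → R}
    (hf : IsRegularSeq f) : IsRegularSeq fun k : Fin r => f k.castSucc := by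
  intro k
  have himage : f '' {j | j < k.castSucc} = (fun k : Fin r => f k.castSucc) '' {j | j < k} := by
    change f '' Set.Iio k.castSucc = _ '' Set.Iio k
    rw [← Fin.image_castSucc_Iio, Set.image_image]
  exact himage ▸ hf k.castSucc

theorem IsRegularSeq.mem_span_of_last_mul_mem {R : Type*} [CommRing R] {r : ℕ}
    {f : Fin (r + 1) → R} (hf : IsRegularSeq f) {g : R}
    (hg : f (Fin.last r) * g ∈ Ideal.span (Set.range fun k : Fin r => f k.castSucc)) :
    g ∈ Ideal.span (Set.range fun k : Fin r => f k.castSucc) := by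
  have himage : f '' {j | j < Fin.last r} = Set.range fun k : Fin r => f k.castSucc := by
    ext x
    simp [Fin.exists_fin_succ']
  exact himage ▸ hf (Fin.last r) g (himage ▸ hg)

theorem IsRegularSeq.mem_span_of_sum_mul_eq_zero {R : Type*} [CommRing R] {r : ℕ}
    {f w : Fin r → R} (hf : IsRegularSeq f) (hw : ∑ j, w j * f j = 0) (j : Fin r) :
    w j ∈ Ideal.span (Set.range f) := by
  induction r with
  | zero => exact j.elim0
  | succ r ih =>
    have hle : Ideal.span (Set.range fun k : Fin r => f k.castSucc) ≤ Ideal.span (Set.range f) :=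
      Ideal.span_mono (Set.range_comp_subset_range Fin.castSucc f)
    have hlast : w (Fin.last r) ∈ Ideal.span (Set.range fun k : Fin r => f k.castSucc) := by
      apply hf.mem_span_of_last_mul_mem
      rw [Fin.sum_univ_castSucc] at hw
      rw [mul_comm, eq_neg_of_add_eq_zero_right hw]
      exact neg_mem (sum_mem fun k _ =>
        Ideal.mul_mem_left _ _ (Ideal.subset_span (Set.mem_range_self k)))
    obtain ⟨a, ha⟩ := Ideal.mem_span_range_iff_exists_fun.1 hlast
    -- Substituting `w_last = ∑ aₖ fₖ` turns the relation into one among the earlier `fₖ`.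
    have hshort : ∑ k : Fin r, (w k.castSucc + a k * f (Fin.last r)) * f k.castSucc = 0 := by
      rw [← hw, Fin.sum_univ_castSucc, ← ha, Finset.sum_mul, ← Finset.sum_add_distrib]
      exact Finset.sum_congr rfl fun k _ => by ring
    refine Fin.lastCases (hle hlast) (fun k => ?_) j
    exact (Ideal.add_mem_iff_left _ (Ideal.mul_mem_left _ (a k)
      (Ideal.subset_span (Set.mem_range_self (Fin.last r))))).1 (hle (ih hf.comp_castSucc hshort k))

section Homogeneous

variable {σ ι R : Type*} [CommSemiring R]

attribute [local instance] MvPolynomial.gradedAlgebra in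
theorem homogeneousComponent_mul_of_isHomogeneous {d : ℕ} {f : MvPolynomial σ R}
    (hf : f.IsHomogeneous d) (g : MvPolynomial σ R) :
    homogeneousComponent d (g * f) = C (coeff 0 g) * f := by
  have h := DirectSum.coe_decompose_mul_add_of_right_mem (homogeneousSubmodule σ R)
    (a := g) (i := 0) hf
  rw [zero_add] at h
  rw [← homogeneousComponent_zero, ← decomposition.decompose'_apply,
    ← decomposition.decompose'_apply]
  exact h

theorem exists_eq_sum_C_mul_of_mem_span [Fintype ι] {d : ℕ} {q : ι → MvPolynomial σ R}
    (hq : ∀ k, (q k).IsHomogeneous d) {f : MvPolynomial σ R} (hf : f.IsHomogeneous d)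
    (hmem : f ∈ Ideal.span (Set.range q)) : ∃ a : ι → R, f = ∑ k, C (a k) * q k := by
  obtain ⟨g, rfl⟩ := Ideal.mem_span_range_iff_exists_fun.1 hmem
  refine ⟨fun k => coeff 0 (g k), ?_⟩
  rw [← homogeneousComponent_eq_self hf, map_sum]
  exact Finset.sum_congr rfl fun k _ => homogeneousComponent_mul_of_isHomogeneous (hq k) (g k)

theorem eq_sum_C_eval_mul_of_mem_span [Fintype ι] [DecidableEq ι] {d : ℕ}
    {q : ι → MvPolynomial σ R} (hq : ∀ k, (q k).IsHomogeneous d) {p : ι → σ → R}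
    (hp : ∀ i k, eval (p k) (q i) = if i = k then 1 else 0) {f : MvPolynomial σ R}
    (hf : f.IsHomogeneous d) (hmem : f ∈ Ideal.span (Set.range q)) :
    f = ∑ k, C (eval (p k) f) * q k := by
  obtain ⟨a, rfl⟩ := exists_eq_sum_C_mul_of_mem_span hq hf hmem
  simp [hp]

end Homogeneous

section Derivation

variable {R A ι κ : Type*} [CommSemiring R] [CommSemiring A] [Algebra R A] [Fintype κ]

theorem derivation_comp_mulVec (D : Derivation R A A) (L : Matrix ι κ A) (v : κ → A) :
    D ∘ L.mulVec v = (L.map D).mulVec v + L.mulVec (D ∘ v) := by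
  funext i
  simp [Matrix.mulVec, dotProduct, Finset.sum_add_distrib, mul_comm, add_comm]

theorem map_derivation_add_mul_self_mulVec (D : Derivation R A A) {L : Matrix κ κ A} {v : κ → A}
    (h : L.mulVec v = D ∘ v) : (L.map D + L * L).mulVec v = D ∘ D ∘ v := by
  rw [Matrix.add_mulVec, ← Matrix.mulVec_mulVec, h, ← derivation_comp_mulVec, h]

theorem derivation_derivation_eq_zero_of_X {σ : Type*} [CharP R 2]
    {D : Derivation R (MvPolynomial σ R) (MvPolynomial σ R)} (hX : ∀ i, D (D (X i)) = 0)
    (f : MvPolynomial σ R) : D (D f) = 0 := by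
  induction f using MvPolynomial.induction_on with
  | C a => simp
  | add f g hf hg => simp [hf, hg]
  | mul_X f i hf => simp [hf, hX, mul_comm, CharTwo.add_self_eq_zero]

end Derivation

section Bockstein

variable {m : ℕ}

/-- The Bockstein `bockstein` as a bundled derivation, giving access to the calculus of
`Derivation`. -/
noncomputable def bocksteinDerivation (m : ℕ) :
    Derivation (ZMod 2) (MvPolynomial (Fin m) (ZMod 2)) (MvPolynomial (Fin m) (ZMod 2)) :=
  ∑ i : Fin m, (X i ^ 2 : MvPolynomial (Fin m) (ZMod 2)) • pderiv i

theorem coe_bocksteinDerivation : ⇑(bocksteinDerivation m) = bockstein := by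
  rw [bocksteinDerivation, ← Derivation.coeFnAddMonoidHom_apply, map_sum]
  funext f
  simp [bockstein]

theorem bockstein_X (i : Fin m) : bockstein (X i) = X i ^ 2 := by
  simp [bockstein, pderiv_X, Pi.single_apply]

theorem bockstein_bockstein (f : MvPolynomial (Fin m) (ZMod 2)) :
    bockstein (bockstein f) = 0 := by
  rw [← coe_bocksteinDerivation]
  refine derivation_derivation_eq_zero_of_X (fun i => ?_) f
  rw [coe_bocksteinDerivation, bockstein_X, ← coe_bocksteinDerivation, Derivation.leibniz_pow,
    CharTwo.two_nsmul]

theorem isHomogeneous_bockstein {d : ℕ} {f : MvPolynomial (Fin m) (ZMod 2)}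
    (hf : f.IsHomogeneous d) : (bockstein f).IsHomogeneous (d + 1) := by
  refine IsHomogeneous.sum _ _ _ fun i _ => ?_
  cases d with
  | zero =>
    rw [← totalDegree_zero_iff_isHomogeneous, totalDegree_eq_zero_iff_eq_C] at hf
    rw [hf, pderiv_C, mul_zero]
    exact isHomogeneous_zero _ _ _
  | succ d =>
    convert (isHomogeneous_X_pow i 2).mul (hf.pderiv (i := i)) using 1
    omega

theorem eval_bockstein {d : ℕ} {f : MvPolynomial (Fin m) (ZMod 2)} (hf : f.IsHomogeneous d)
    (p : Fin m → ZMod 2) : eval p (bockstein f) = d * eval p f := by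
  calc eval p (bockstein f) = eval p (∑ i, X i * pderiv i f) := by simp [bockstein, ZMod.pow_card]
    _ = d * eval p f := by rw [hf.sum_X_mul_pderiv]; simp

end Bockstein

theorem bockstein_L_plus_L_sq_general {m n : ℕ} {q : Fin n → MvPolynomial (Fin m) (ZMod 2)}
    (hq : ∀ i, (q i).IsHomogeneous 2) (hreg : IsRegularSeq q) {p : Fin n → Fin m → ZMod 2}
    (hp : ∀ i k, eval (p k) (q i) = if i = k then 1 else 0)
    {L : Matrix (Fin n) (Fin n) (MvPolynomial (Fin m) (ZMod 2))}
    (hL : ∀ i j, (L i j).IsHomogeneous 1) (hLq : L.mulVec q = fun k => bockstein (q k)) :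
    L.map bockstein + L * L =
      ∑ k, q k • (L.map (eval (p k)) * L.map (eval (p k)) + L.map (eval (p k))).map C := by
  have hsyzygy : (L.map bockstein + L * L).mulVec q = 0 := by
    rw [← coe_bocksteinDerivation] at hLq ⊢
    rw [map_derivation_add_mul_self_mulVec _ hLq, coe_bocksteinDerivation]
    exact funext fun k => bockstein_bockstein (q k)
  ext1 i j
  have hhom : ((L.map bockstein + L * L) i j).IsHomogeneous 2 :=
    (isHomogeneous_bockstein (hL i j)).add
      (IsHomogeneous.sum _ _ _ fun k _ => (hL i k).mul (hL k j))
  have heval (k : Fin n) : eval (p k) ((L.map bockstein + L * L) i j) =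
      (L.map (eval (p k)) * L.map (eval (p k)) + L.map (eval (p k))) i j := by
    simp [Matrix.mul_apply, eval_bockstein (hL i j), add_comm]
  rw [eq_sum_C_eval_mul_of_mem_span hq hp hhom
    (hreg.mem_span_of_sum_mul_eq_zero (congrFun hsyzygy i) j), Matrix.sum_apply]
  simp only [heval, Matrix.smul_apply, Matrix.map_apply, smul_eq_mul, mul_comm]

section BijectiveForm

variable {σ ι R : Type*} [Fintype σ] [CommSemiring R]

/-- The `i`-th member of a sequence of quadratic polynomials in bijective form, with mixed
coefficients `a l k`; only the values `a l k` with `l < k` matter. -/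
noncomputable def bijectiveForm [LinearOrder σ] (a : σ → σ → R) (i : σ) : MvPolynomial σ R :=
  X i ^ 2 + ∑ l, ∑ k, if l < k then C (a l k) * X l * X k else 0

theorem isHomogeneous_bijectiveForm [LinearOrder σ] (a : σ → σ → R) (i : σ) :
    (bijectiveForm a i).IsHomogeneous 2 := by
  refine (isHomogeneous_X_pow i 2).add (IsHomogeneous.sum _ _ _ fun l _ =>
    IsHomogeneous.sum _ _ _ fun k _ => ?_)
  split_ifs
  · exact ((isHomogeneous_C σ _).mul (isHomogeneous_X R l)).mul (isHomogeneous_X R k)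
  · exact isHomogeneous_zero σ R 2

theorem eval_single_bijectiveForm [LinearOrder σ] (a : σ → σ → R) (i j : σ) :
    eval (Pi.single j 1) (bijectiveForm a i) = if i = j then 1 else 0 := by
  have hmixed (l k : σ) :
      eval (Pi.single j 1) (if l < k then C (a l k) * X l * X k else 0) = 0 := by
    split_ifs with hlk
    · rcases eq_or_ne l j with rfl | hl
      · simp [hlk.ne']
      · simp [hl]
    · exact map_zero _
  simp [bijectiveForm, hmixed, Pi.single_apply]

/-- The matrix of linear forms `Σ_k A_k x_k`. -/
noncomputable def linearFormMatrix (A : σ → Matrix ι ι R) : Matrix ι ι (MvPolynomial σ R) :=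
  ∑ k, (X k : MvPolynomial σ R) • (A k).map C

theorem linearFormMatrix_apply (A : σ → Matrix ι ι R) (i j : ι) :
    linearFormMatrix A i j = ∑ k, X k * C (A k i j) := by
  simp [linearFormMatrix, Matrix.sum_apply]

theorem isHomogeneous_linearFormMatrix (A : σ → Matrix ι ι R) (i j : ι) :
    (linearFormMatrix A i j).IsHomogeneous 1 := by
  rw [linearFormMatrix_apply]
  exact IsHomogeneous.sum _ _ _ fun k _ => (isHomogeneous_X R k).mul (isHomogeneous_C σ _)

theorem linearFormMatrix_map_eval_single [DecidableEq σ] (A : σ → Matrix ι ι R) (k : σ) :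
    (linearFormMatrix A).map (eval (Pi.single k 1)) = A k := by
  ext i j
  simp [linearFormMatrix_apply, Pi.single_apply]

end BijectiveForm

/-- If `q₁,…,q_n` are in bijective form, form a regular sequence in every
order, and `L = Σ_i L_i x_i` is a matrix of homogeneous linear forms with `β(q) = Lq`,
then `β(L) + L² = Σ_i (L_i² + L_i) q_i`. -/
theorem bockstein_L_plus_L_sq {n : ℕ}
    (q : Fin n → MvPolynomial (Fin n) (ZMod 2))
    (c : Fin n → Fin n → Fin n → ZMod 2)
    (hbij : ∀ i, q i = X i ^ 2 +
      ∑ l : Fin n, ∑ k : Fin n, if l < k then C (c i l k) * X l * X k else 0)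
    (hreg : ∀ σ : Equiv.Perm (Fin n), IsRegularSeq (fun k => q (σ k)))
    (Ls : Fin n → Matrix (Fin n) (Fin n) (ZMod 2))
    (L : Matrix (Fin n) (Fin n) (MvPolynomial (Fin n) (ZMod 2)))
    (hL : L = ∑ i : Fin n, (X i : MvPolynomial (Fin n) (ZMod 2)) • (Ls i).map C)
    (hLq : L.mulVec q = fun k => bockstein (q k)) :
    L.map bockstein + L * L = ∑ i : Fin n, q i • (Ls i * Ls i + Ls i).map C := by
  obtain rfl : q = fun i => bijectiveForm (c i) i := funext hbij
  obtain rfl : L = linearFormMatrix Ls := hL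
  simpa only [linearFormMatrix_map_eval_single] using
    bockstein_L_plus_L_sq_general (fun i => isHomogeneous_bijectiveForm (c i) i) (hreg 1)
      (fun i => eval_single_bijectiveForm (c i) i) (isHomogeneous_linearFormMatrix Ls) hLq
end
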